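/- Let q, r be smooth solutions of the coupled DNLSII equations i q_t + q_xx + i q r q_x = 0 and i r_t − r_xx + i r q r_x = 0 on a simply connected domain. Then the differential 1-form ω = (1/2) i q r dx − (1/4)( i q² r² − 2 q r_x + 2 r q_x ) dt is closed, so there exists a function S with S_x = (1/2) i q r and S_t = −(1/4)( i q² r² − 2 q r_x + 2 r q_x ), and H = exp(S) satisfies H_x = (1/2) i H q r and H_t = −(1/4) H ( i q² r² − 2 q r_x + 2 r q_x ). -/

import Mathlib

/-!
Write `ω = P dx + T dt`. Closedness is the identity `P_t - T_x = (r/2) E₁ + (q/2) E₂`, where `E₁` and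
`E₂` are the left-hand sides of the two DNLSII equations.

The existence of `S` is the Poincaré lemma on a simply connected open set (`exists_primitive`).
Mathlib provides primitives on convex open sets, hence on a ball around each point of `Ω`; two of
these differ by a locally constant function on the overlap of their balls. Such local data define a
fibre bundle over `Ω` with fibre `ℂ` given the discrete topology (`primitiveBundle`), whose
sections are the global primitives. It is a covering, and since `Ω` is simply connected and locally
path-connected the identity map of `Ω` lifts to a section (`exists_glue`). The equations for
`H = exp S` follow from the chain rule.
-/

open Complex

noncomputable def px (q : ℝ → ℝ → ℂ) : ℝ → ℝ → ℂ :=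
  fun x t => deriv (fun x' => q x' t) x

noncomputable def pt (q : ℝ → ℝ → ℂ) : ℝ → ℝ → ℂ :=
  fun x t => deriv (fun t' => q x t') t

open Topology in
/-- The bundle of germs of solutions of the gluing problem for functions `f i` on open sets `U i`
whose pairwise differences are locally constant. The fibre `A` is discrete, and the vector `v` over
`x` in the chart `i` stands for the value `v + f i x` at `x`; this forces the coordinate changes. The
preferred chart at `x` is the one with index `x`. -/
def primitiveBundle {X A : Type*} [TopologicalSpace X] [TopologicalSpace A]
    [DiscreteTopology A] [AddCommGroup A]
    (U : X → Set X) (hU : ∀ i, IsOpen (U i)) (hmem : ∀ i, i ∈ U i) (f : X → X → A)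
    (hf : ∀ i j x, x ∈ U i → x ∈ U j → ∀ᶠ y in 𝓝 x, f i y - f j y = f i x - f j x) :
    FiberBundleCore X X A where
  baseSet := U
  isOpen_baseSet := hU
  indexAt := id
  mem_baseSet_at := hmem
  coordChange i j x v := v + (f i x - f j x)
  coordChange_self i x _ v := by simp
  continuousOn_coordChange i j := by
    rintro ⟨x, v⟩ ⟨⟨hi, hj⟩, -⟩
    refine ContinuousAt.continuousWithinAt ?_
    refine (continuousAt_const (y := v + (f i x - f j x))).congr ?_
    rw [nhds_prod_eq]
    have hv : ∀ᶠ w in 𝓝 v, w = v := by simp [nhds_discrete]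
    filter_upwards [(hf i j x hi hj).prod_mk hv] with p hp
    rw [hp.1, hp.2]
  coordChange_comp i j k x _ v := by abel

open Topology in
/-- Functions given locally up to locally constant functions glue, up to locally constant functions,
on a simply connected and locally path-connected space. The bundle `primitiveBundle` has discrete
fibre, so it is a covering and the identity map lifts to a global section. The topology of `A` plays
no role beyond its discreteness; `f` need not be continuous. -/
theorem exists_glue {X A : Type*} [TopologicalSpace X] [SimplyConnectedSpace X]
    [LocallyPathConnectedSpace X] [TopologicalSpace A] [DiscreteTopology A] [AddCommGroup A]
    (U : X → Set X) (hU : ∀ i, IsOpen (U i)) (hmem : ∀ i, i ∈ U i) (f : X → X → A)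
    (hf : ∀ i j x, x ∈ U i → x ∈ U j → ∀ᶠ y in 𝓝 x, f i y - f j y = f i x - f j x) :
    ∃ S : X → A, ∀ x, ∀ᶠ y in 𝓝 x, S y - f x y = S x - f x x := by
  let Z : FiberBundleCore X X A := primitiveBundle U hU hmem f hf
  have cov : IsCoveringMap Z.proj := FiberBundle.isCoveringMap
  let a₀ : X := Classical.arbitrary X
  obtain ⟨s, ⟨-, hs⟩, -⟩ := cov.existsUnique_continuousMap_lifts (ContinuousMap.id X) a₀
    (⟨a₀, (0 : A)⟩ : Z.TotalSpace) rfl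
  have hs' : ∀ y, (s y).1 = y := fun y => congrFun hs y
  let v : X → A := fun y => (s y).2
  -- Read the section back as a function: the vector `v y` lives in the preferred chart at `y`.
  refine ⟨fun y => v y + f (s y).1 (s y).1, fun x => ?_⟩
  have hcont : ContinuousAt (fun y => (Z.localTriv x (s y)).2) x := by
    have hx : s x ∈ (Z.localTriv x).source := by
      rw [(Z.localTriv x).mem_source]
      change (s x).1 ∈ U x
      rw [hs']; exact hmem x
    exact continuous_snd.continuousAt.comp
      (((Z.localTriv x).continuousAt hx).comp s.continuous.continuousAt)
  have hev := hcont.eventually (p := fun w => w = (Z.localTriv x (s x)).2)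
    (by simp [nhds_discrete])
  have key : ∀ y, (Z.localTriv x (s y)).2 = v y + f (s y).1 (s y).1 - f x y := fun y => by
    conv_rhs => rw [← show f x (s y).1 = f x y by rw [hs'], add_sub_assoc]
    rfl
  filter_upwards [hev] with y hy
  rwa [key, key] at hy

open Topology in
/-- The Poincaré lemma for 1-forms on a simply connected open set. -/
theorem exists_primitive {E F : Type*} [NormedAddCommGroup E] [NormedSpace ℝ E]
    [NormedAddCommGroup F] [NormedSpace ℝ F] [CompleteSpace F] {Ω : Set E} (hΩ : IsOpen Ω)
    [SimplyConnectedSpace Ω] {ω : E → E →L[ℝ] F} (hω : DifferentiableOn ℝ ω Ω)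
    (hdω : ∀ p ∈ Ω, ∀ u v, fderiv ℝ ω p u v = fderiv ℝ ω p v u) :
    ∃ S : E → F, ∀ p ∈ Ω, HasFDerivAt S (ω p) p := by
  have hloc : ∀ x : Ω, ∃ V : Set E, IsOpen V ∧ (x : E) ∈ V ∧
      ∃ g : E → F, ∀ y ∈ V, HasFDerivAt g (ω y) y := by
    rintro ⟨x, hx⟩
    obtain ⟨r, hr, hball⟩ := Metric.isOpen_iff.1 hΩ x hx
    exact ⟨_, Metric.isOpen_ball, Metric.mem_ball_self hr,
      (convex_ball x r).exists_forall_hasFDerivAt_of_fderiv_symmetric Metric.isOpen_ball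
        (hω.mono hball) fun a ha => hdω a (hball ha)⟩
  choose V hVo hVmem g hg using hloc
  have := hΩ.locallyPathConnectedSpace
  -- `F` enters with the discrete topology `⊥` here, as the fibre of a covering.
  obtain ⟨S, hS⟩ := @exists_glue Ω F _ _ _ ⊥ (@DiscreteTopology.mk F ⊥ rfl) _
    (fun x : Ω => Subtype.val ⁻¹' V x)
    (fun x => (hVo x).preimage continuous_subtype_val) hVmem (fun i (y : Ω) => g i y) <| by
    rintro i j x hi hj
    refine continuous_subtype_val.continuousAt.eventually
      (p := fun y : E => g i y - g j y = g i x - g j x) ?_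
    obtain ⟨r, hr, hball⟩ := Metric.isOpen_iff.1 ((hVo i).inter (hVo j)) (x : E) ⟨hi, hj⟩
    have hd : ∀ y ∈ Metric.ball (x : E) r, HasFDerivAt (fun y => g i y - g j y) 0 y :=
      fun y hy => by
        simpa only [sub_self] using! (hg i y (hball hy).1).sub (hg j y (hball hy).2)
    filter_upwards [Metric.ball_mem_nhds (x : E) hr] with y hy
    exact Metric.isOpen_ball.is_const_of_fderiv_eq_zero (convex_ball (x : E) r).isPreconnected
      (fun z hz => (hd z hz).differentiableAt.differentiableWithinAt)
      (fun z hz => (hd z hz).fderiv) hy (Metric.mem_ball_self hr)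
  classical
  refine ⟨fun p => if h : p ∈ Ω then S ⟨p, h⟩ else 0, fun p hp => ?_⟩
  have hev : ∀ᶠ y in 𝓝 p, ∀ h : y ∈ Ω,
      S ⟨y, h⟩ - g ⟨p, hp⟩ y = S ⟨p, hp⟩ - g ⟨p, hp⟩ p := by
    have := hS ⟨p, hp⟩
    rw [nhds_subtype_eq_comap, Filter.eventually_comap] at this
    filter_upwards [this] with y hy h
    exact hy ⟨y, h⟩ rfl
  refine ((hg ⟨p, hp⟩ p (hVmem ⟨p, hp⟩)).add_const (S ⟨p, hp⟩ - g ⟨p, hp⟩ p))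
    |>.congr_of_eventuallyEq ?_
  filter_upwards [hev, hΩ.mem_nhds hp] with y hy hyΩ
  rw [dif_pos hyΩ, ← hy hyΩ]; abel

theorem hasDerivAt_px {f : ℝ → ℝ → ℂ} {L : ℝ × ℝ →L[ℝ] ℂ} {p : ℝ × ℝ}
    (h : HasFDerivAt (fun p : ℝ × ℝ => f p.1 p.2) L p) :
    HasDerivAt (fun x => f x p.2) (L (1, 0)) p.1 :=
  HasFDerivAt.comp_hasDerivAt (f := fun x : ℝ => (x, p.2)) p.1 h
    ((hasDerivAt_id p.1).prodMk (hasDerivAt_const p.1 p.2))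

theorem hasDerivAt_pt {f : ℝ → ℝ → ℂ} {L : ℝ × ℝ →L[ℝ] ℂ} {p : ℝ × ℝ}
    (h : HasFDerivAt (fun p : ℝ × ℝ => f p.1 p.2) L p) :
    HasDerivAt (fun t => f p.1 t) (L (0, 1)) p.2 :=
  HasFDerivAt.comp_hasDerivAt (f := fun t : ℝ => (p.1, t)) p.2 h
    ((hasDerivAt_const p.2 p.1).prodMk (hasDerivAt_id p.2))

theorem contDiffOn_px {Ω : Set (ℝ × ℝ)} (hΩ : IsOpen Ω) {f : ℝ → ℝ → ℂ}
    (hf : ContDiffOn ℝ (⊤ : ℕ∞) (fun p : ℝ × ℝ => f p.1 p.2) Ω) :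
    ContDiffOn ℝ (⊤ : ℕ∞) (fun p : ℝ × ℝ => px f p.1 p.2) Ω := by
  refine ((hf.fderiv_of_isOpen (m := (⊤ : ℕ∞)) hΩ (by simp)).clm_apply
    (contDiffOn_const (c := ((1, 0) : ℝ × ℝ)))).congr fun p hp => ?_
  exact (hasDerivAt_px ((hf.differentiableOn (by simp)).differentiableAt
    (hΩ.mem_nhds hp)).hasFDerivAt).deriv

/-- Coordinate form of `exists_primitive` on the plane: `P dx + T dt` with `P_t = T_x` on a simply
connected open set has a potential `S`. The conclusion gives genuine derivatives, not only values
of `px S` and `pt S`. -/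
theorem exists_potential {Ω : Set (ℝ × ℝ)} (hΩ : IsOpen Ω) [SimplyConnectedSpace Ω]
    {P T : ℝ → ℝ → ℂ}
    (hP : DifferentiableOn ℝ (fun p : ℝ × ℝ => P p.1 p.2) Ω)
    (hT : DifferentiableOn ℝ (fun p : ℝ × ℝ => T p.1 p.2) Ω)
    (hclosed : ∀ p ∈ Ω, pt P p.1 p.2 = px T p.1 p.2) :
    ∃ S : ℝ → ℝ → ℂ, ∀ p ∈ Ω,
      HasDerivAt (fun x => S x p.2) (P p.1 p.2) p.1 ∧
      HasDerivAt (fun t => S p.1 t) (T p.1 p.2) p.2 := by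
  -- `A z = z dx` and `B z = z dt`, so the form is `A ∘ P + B ∘ T`.
  let A := ContinuousLinearMap.smulRightL ℝ (ℝ × ℝ) ℂ (.fst ℝ ℝ ℝ)
  let B := ContinuousLinearMap.smulRightL ℝ (ℝ × ℝ) ℂ (.snd ℝ ℝ ℝ)
  have hω : ∀ p ∈ Ω, HasFDerivAt (fun p : ℝ × ℝ => A (P p.1 p.2) + B (T p.1 p.2))
      (A ∘L fderiv ℝ (fun p : ℝ × ℝ => P p.1 p.2) p
        + B ∘L fderiv ℝ (fun p : ℝ × ℝ => T p.1 p.2) p) p := fun p hp =>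
    (A.hasFDerivAt.comp p (hP.differentiableAt (hΩ.mem_nhds hp)).hasFDerivAt).add
      (B.hasFDerivAt.comp p (hT.differentiableAt (hΩ.mem_nhds hp)).hasFDerivAt)
  obtain ⟨S, hS⟩ := exists_primitive hΩ
    (fun p hp => (hω p hp).differentiableAt.differentiableWithinAt) <| by
    intro p hp u v
    have hPd := (hP.differentiableAt (hΩ.mem_nhds hp)).hasFDerivAt
    have hTd := (hT.differentiableAt (hΩ.mem_nhds hp)).hasFDerivAt
    have hc := hclosed p hp
    rw [show pt P p.1 p.2 = _ from (hasDerivAt_pt hPd).deriv,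
      show px T p.1 p.2 = _ from (hasDerivAt_px hTd).deriv] at hc
    have hlin : ∀ (L : ℝ × ℝ →L[ℝ] ℂ) (w : ℝ × ℝ),
        L w = w.1 * L (1, 0) + w.2 * L (0, 1) := fun L w => by
      conv_lhs => rw [show w = w.1 • ((1, 0) : ℝ × ℝ) + w.2 • ((0, 1) : ℝ × ℝ) by ext <;> simp]
      simp only [map_add, map_smul, Complex.real_smul]
    rw [(hω p hp).fderiv]
    have hA : ∀ z w, A z w = w.1 * z := fun z w => by simp [A]
    have hB : ∀ z w, B z w = w.2 * z := fun z w => by simp [B]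
    simp only [add_apply, ContinuousLinearMap.comp_apply, hA, hB]
    rw [hlin _ u, hlin _ v, hlin (fderiv ℝ (fun p : ℝ × ℝ => T p.1 p.2) p) u,
      hlin (fderiv ℝ (fun p : ℝ × ℝ => T p.1 p.2) p) v]
    linear_combination ((v.1 : ℂ) * u.2 - u.1 * v.2) * hc
  refine ⟨fun x t => S (x, t), fun p hp => ⟨?_, ?_⟩⟩
  · simpa [A, B] using hasDerivAt_px (f := fun x t => S (x, t)) (hS p hp)
  · simpa [A, B] using hasDerivAt_pt (f := fun x t => S (x, t)) (hS p hp)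

/-- On a simply connected domain, the 1-form
`ω = (1/2) i q r dx − (1/4)(i q² r² − 2 q rₓ + 2 r qₓ) dt` associated to a smooth
solution of the coupled DNLSII equations is closed, hence has a potential `S`, and
`H = exp S` satisfies `Hₓ = (1/2) i H q r`,
`H_t = −(1/4) H (i q² r² − 2 q rₓ + 2 r qₓ)`. -/
theorem dnlsII_closed_form_and_H (Ω : Set (ℝ × ℝ)) (hΩ : IsOpen Ω)
    (hsc : SimplyConnectedSpace Ω)
    (q r : ℝ → ℝ → ℂ)
    (hq : ContDiffOn ℝ (⊤ : ℕ∞) (fun p : ℝ × ℝ => q p.1 p.2) Ω)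
    (hr : ContDiffOn ℝ (⊤ : ℕ∞) (fun p : ℝ × ℝ => r p.1 p.2) Ω)
    (heq1 : ∀ p ∈ Ω, Complex.I * pt q p.1 p.2 + px (px q) p.1 p.2
      + Complex.I * q p.1 p.2 * r p.1 p.2 * px q p.1 p.2 = 0)
    (heq2 : ∀ p ∈ Ω, Complex.I * pt r p.1 p.2 - px (px r) p.1 p.2
      + Complex.I * r p.1 p.2 * q p.1 p.2 * px r p.1 p.2 = 0) :
    (∀ p ∈ Ω, pt (fun x t => (Complex.I / 2) * q x t * r x t) p.1 p.2
      = px (fun x t => -(1/4) * (Complex.I * (q x t)^2 * (r x t)^2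
          - 2 * q x t * px r x t + 2 * r x t * px q x t)) p.1 p.2)
    ∧ ∃ S : ℝ → ℝ → ℂ,
      (∀ p ∈ Ω,
        px S p.1 p.2 = (Complex.I / 2) * q p.1 p.2 * r p.1 p.2 ∧
        pt S p.1 p.2 = -(1/4) * (Complex.I * (q p.1 p.2)^2 * (r p.1 p.2)^2
            - 2 * q p.1 p.2 * px r p.1 p.2 + 2 * r p.1 p.2 * px q p.1 p.2)) ∧
      (∀ p ∈ Ω,
        px (fun x t => Complex.exp (S x t)) p.1 p.2
          = (Complex.I / 2) * Complex.exp (S p.1 p.2) * q p.1 p.2 * r p.1 p.2 ∧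
        pt (fun x t => Complex.exp (S x t)) p.1 p.2
          = -(1/4) * Complex.exp (S p.1 p.2) * (Complex.I * (q p.1 p.2)^2 * (r p.1 p.2)^2
              - 2 * q p.1 p.2 * px r p.1 p.2 + 2 * r p.1 p.2 * px q p.1 p.2)) := by
  have hqx := contDiffOn_px hΩ hq
  have hrx := contDiffOn_px hΩ hr
  have diffAt : ∀ {f : ℝ → ℝ → ℂ},
      ContDiffOn ℝ (⊤ : ℕ∞) (fun p : ℝ × ℝ => f p.1 p.2) Ω → ∀ p ∈ Ω,
      DifferentiableAt ℝ (fun p : ℝ × ℝ => f p.1 p.2) p := fun hf p hp =>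
    (hf.differentiableOn (by simp)).differentiableAt (hΩ.mem_nhds hp)
  have dx : ∀ {f : ℝ → ℝ → ℂ},
      ContDiffOn ℝ (⊤ : ℕ∞) (fun p : ℝ × ℝ => f p.1 p.2) Ω → ∀ p ∈ Ω,
      HasDerivAt (fun x => f x p.2) (px f p.1 p.2) p.1 := fun hf p hp =>
    (hasDerivAt_px (diffAt hf p hp).hasFDerivAt).differentiableAt.hasDerivAt
  have dt : ∀ {f : ℝ → ℝ → ℂ},
      ContDiffOn ℝ (⊤ : ℕ∞) (fun p : ℝ × ℝ => f p.1 p.2) Ω → ∀ p ∈ Ω,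
      HasDerivAt (fun t => f p.1 t) (pt f p.1 p.2) p.2 := fun hf p hp =>
    (hasDerivAt_pt (diffAt hf p hp).hasFDerivAt).differentiableAt.hasDerivAt
  have hclosed : ∀ p ∈ Ω, pt (fun x t => (Complex.I / 2) * q x t * r x t) p.1 p.2
      = px (fun x t => -(1/4) * (Complex.I * (q x t)^2 * (r x t)^2
          - 2 * q x t * px r x t + 2 * r x t * px q x t)) p.1 p.2 := by
    intro p hp
    have hL := (((dt hq p hp).const_mul (Complex.I / 2)).fun_mul (dt hr p hp)).deriv
    have hR := ((((((dx hq p hp).fun_pow 2).const_mul Complex.I).fun_mul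
      ((dx hr p hp).fun_pow 2)).fun_sub (((dx hq p hp).const_mul 2).fun_mul (dx hrx p hp))).fun_add
      (((dx hr p hp).const_mul 2).fun_mul (dx hqx p hp))).const_mul (-(1/4) : ℂ) |>.deriv
    refine hL.trans (Eq.trans ?_ hR.symm)
    push_cast
    -- The defect `P_t - T_x` is exactly `(r/2) · (equation for q) + (q/2) · (equation for r)`.
    linear_combination (r p.1 p.2 / 2) * heq1 p hp + (q p.1 p.2 / 2) * heq2 p hp
  refine ⟨hclosed, ?_⟩
  obtain ⟨S, hS⟩ := exists_potential hΩ
    (fun p hp => (((diffAt hq p hp).const_mul (Complex.I / 2)).fun_mul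
      (diffAt hr p hp)).differentiableWithinAt)
    (fun p hp => ((((((diffAt hq p hp).fun_pow 2).const_mul Complex.I).fun_mul
      ((diffAt hr p hp).fun_pow 2)).fun_sub (((diffAt hq p hp).const_mul 2).fun_mul
      (diffAt hrx p hp))).fun_add (((diffAt hr p hp).const_mul 2).fun_mul
      (diffAt hqx p hp))).const_mul (-(1/4) : ℂ) |>.differentiableWithinAt) hclosed
  refine ⟨S, fun p hp => ⟨(hS p hp).1.deriv, (hS p hp).2.deriv⟩, fun p hp => ⟨?_, ?_⟩⟩
  · exact (hS p hp).1.cexp.deriv.trans (by ring)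
  · exact (hS p hp).2.cexp.deriv.trans (by ring)
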